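/- arXiv:1511.05384 — 2 statements merged into one kernel-verified Lean document; each statement's English description precedes it below -/
import Mathlib

section
/- Let G be a finite simple graph and let m, k be integers with 1 ≤ m < k. If ψ_k(G) > 0, then ψ_m(G) ≥ ψ_k(G) + ⌊k/m⌋ − 1. -/
/-- `S` is a `k`-path vertex cover of `G`: every path in `G` on `k` vertices
(i.e. whose support has `k` vertices) contains at least one vertex of `S`. -/
def SimpleGraph.IsPathVertexCover {V : Type*} (G : SimpleGraph V) (k : ℕ) (S : Set V) : Prop :=
  ∀ ⦃u w : V⦄ (p : G.Walk u w), p.IsPath → p.support.length = k → ∃ x ∈ p.support, x ∈ S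

/-- `ψ_k(G)`: the minimum cardinality of a `k`-path vertex cover of `G`. -/
noncomputable def SimpleGraph.pathNum {V : Type*} [Fintype V] (G : SimpleGraph V) (k : ℕ) : ℕ :=
  sInf {m : ℕ | ∃ S : Finset V, G.IsPathVertexCover k ↑S ∧ S.card = m}

/-!
Cut a path on `k` vertices into `⌊k/m⌋` disjoint subpaths on `m` vertices, plus a remainder. An
`m`-path vertex cover `S` meets each of the subpaths, so after discarding any `⌊k/m⌋ - 1` vertices
it still meets the path. Applied to a minimum `S`, this gives a `k`-path vertex cover of size
`ψ_m(G) - (⌊k/m⌋ - 1)`. There are that many vertices to discard: otherwise even the empty set would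
be a `k`-path vertex cover, against `ψ_k(G) > 0`.
-/

section PathVertexCover

variable {V : Type*} {G : SimpleGraph V} {m k : ℕ} {S : Set V} {u w : V}

theorem exists_mem_take_support_of_isPathVertexCover (hS : G.IsPathVertexCover m S) (hm : 0 < m)
    {p : G.Walk u w} (hp : p.IsPath) (hlen : m ≤ p.support.length) :
    ∃ x ∈ p.support.take m, x ∈ S := by
  have h_take : (p.take (m - 1)).support = p.support.take m := by
    rw [SimpleGraph.Walk.support_take, Nat.sub_add_cancel hm]
  rw [← h_take]
  refine hS _ (hp.take _) ?_
  rw [h_take, List.length_take_of_le hlen]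

theorem exists_mem_support_diff_of_isPathVertexCover (hS : G.IsPathVertexCover m S) (hm : 0 < m)
    (R : Finset V) {p : G.Walk u w} (hp : p.IsPath)
    (hlen : (R.card + 1) * m ≤ p.support.length) : ∃ x ∈ p.support, x ∈ S \ R := by
  classical
  induction R using Finset.strongInduction generalizing u with
  | H R ih =>
    rw [Nat.succ_mul] at hlen
    obtain ⟨x, hx_take, hxS⟩ :=
      exists_mem_take_support_of_isPathVertexCover hS hm hp (le_of_add_le_right hlen)
    by_cases hxR : x ∈ R
    · -- `x` lies outside the rest of the path, so only `R.erase x` has to be avoided there.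
      have h_card : (R.erase x).card + 1 = R.card := Finset.card_erase_add_one hxR
      have h_drop : (p.drop m).support = p.support.drop m := by
        have : m ≤ R.card * m := Nat.le_mul_of_pos_left m (Finset.card_pos.2 ⟨x, hxR⟩)
        rw [SimpleGraph.Walk.drop_support_eq_support_drop_min, min_eq_left]
        rw [SimpleGraph.Walk.length_support] at hlen
        omega
      obtain ⟨y, hy_drop, hyS, hyR⟩ := ih _ (Finset.erase_ssubset hxR) (hp.drop m) (by
        rw [h_card, h_drop, List.length_drop]
        exact Nat.le_sub_of_add_le hlen)
      rw [h_drop] at hy_drop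
      have hyx : y ≠ x := by
        rintro rfl
        exact List.disjoint_take_drop hp.support_nodup le_rfl hx_take hy_drop
      exact ⟨y, List.mem_of_mem_drop hy_drop, hyS,
        fun hy => hyR (Finset.mem_erase.2 ⟨hyx, hy⟩)⟩
    · exact ⟨x, List.mem_of_mem_take hx_take, hxS, hxR⟩

theorem isPathVertexCover_diff_of_card_lt_div (hS : G.IsPathVertexCover m S) {R : Finset V}
    (hR : R.card < k / m) : G.IsPathVertexCover k (S \ R) := by
  have hm : 0 < m := Nat.pos_of_ne_zero fun h => by simp [h] at hR
  intro u w p hp hpk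
  refine exists_mem_support_diff_of_isPathVertexCover hS hm R hp ?_
  rw [hpk]
  exact (Nat.le_div_iff_mul_le hm).1 hR

end PathVertexCover

section PathNum

variable {V : Type*} [Fintype V] {G : SimpleGraph V} {m k : ℕ} {S : Finset V}

theorem pathNum_le_card (hS : G.IsPathVertexCover k S) : G.pathNum k ≤ S.card :=
  Nat.sInf_le ⟨S, hS, rfl⟩

theorem exists_isPathVertexCover_card_eq_pathNum (G : SimpleGraph V) (k : ℕ) :
    ∃ S : Finset V, G.IsPathVertexCover k S ∧ S.card = G.pathNum k :=
  have h_univ : G.IsPathVertexCover k (Finset.univ : Finset V) :=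
    fun u _ p _ _ => ⟨u, p.start_mem_support, Finset.mem_coe.2 (Finset.mem_univ u)⟩
  Nat.sInf_mem (s := {m | ∃ S : Finset V, G.IsPathVertexCover k S ∧ S.card = m})
    ⟨_, Finset.univ, h_univ, rfl⟩

theorem pathNum_le_card_sdiff [DecidableEq V] (hS : G.IsPathVertexCover m S) {R : Finset V}
    (hR : R.card < k / m) : G.pathNum k ≤ (S \ R).card := by
  apply pathNum_le_card
  rw [Finset.coe_sdiff]
  exact isPathVertexCover_diff_of_card_lt_div hS hR

theorem div_le_card_of_pathNum_pos (hS : G.IsPathVertexCover m S) (hpos : 0 < G.pathNum k) :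
    k / m ≤ S.card := by
  classical
  by_contra! h_lt
  have h_zero := pathNum_le_card_sdiff hS h_lt
  rw [Finset.sdiff_self, Finset.card_empty] at h_zero
  exact hpos.not_ge h_zero

end PathNum

theorem psi_m_ge_psi_k {V : Type*} [Fintype V] (G : SimpleGraph V)
    (m k : ℕ) (hm : 1 ≤ m) (hmk : m < k) (hpos : 0 < G.pathNum k) :
    G.pathNum m ≥ G.pathNum k + k / m - 1 := by
  classical
  obtain ⟨S, hS, hS_card⟩ := exists_isPathVertexCover_card_eq_pathNum G m
  have h_div_pos : 0 < k / m := Nat.div_pos hmk.le hm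
  have h_div_le : k / m ≤ S.card := div_le_card_of_pathNum_pos hS hpos
  obtain ⟨R, hRS, hR_card⟩ : ∃ R ⊆ S, R.card = k / m - 1 :=
    Finset.exists_subset_card_eq ((Nat.sub_le _ _).trans h_div_le)
  have h_le : G.pathNum k ≤ (S \ R).card :=
    pathNum_le_card_sdiff hS (hR_card ▸ Nat.sub_one_lt h_div_pos.ne')
  rw [Finset.card_sdiff_of_subset hRS] at h_le
  omega
end

section
/- Let G = (V,E) be a connected simple graph on n ≥ 4 vertices with V = {p_1, …, p_{n−1}, q}, where p_1 − p_2 − ⋯ − p_{n−1} is a path in G. If ψ_{n−1}(G) = 2 and ψ_n(G) = 0, then: (1) the degrees of p_1 and p_{n−1} in G are each at least 2; (2) p_1p_{n−1} ∉ E, qp_1 ∉ E, qp_{n−1} ∉ E, and for every i ∈ {2, …, n−2}, if qp_i ∈ E then qp_{i+1} ∉ E. -/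
/-!
On a path with at least two vertices, a vertex `v` whose only possible neighbor is `w` stands next
to `w`. A path missing just one vertex therefore contains `w`: otherwise `w` is the missing vertex,
and the path contains `v` without `w`. So if no single vertex covers these paths, all degrees are at
least two.

For the non-adjacencies, a vertex `q` off a path whose neighbors include an end of it, or two
consecutive vertices of it, can be inserted into the path. If the ends of the path are adjacent, the
path closes up into a cycle, which connectedness joins to some vertex off it; opening the cycle
there again gives a longer path.
-/

namespace PathVertexCover

variable {V : Type*} {G : SimpleGraph V}

/-- The list `l` consists of the vertices of a path of `G`, in order. Unlike for walks, the ends do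
not enter the type, so that paths can be cut and reassembled freely. The empty list is allowed. -/
structure IsPathList (G : SimpleGraph V) (l : List V) : Prop where
  isChain : l.IsChain G.Adj
  nodup : l.Nodup

namespace IsPathList

variable {l : List V} {q : V}

theorem append_cons {l₁ l₂ : List V} (hl : IsPathList G (l₁ ++ l₂)) (hq : q ∉ l₁ ++ l₂)
    (hpred : ∀ a ∈ l₁.getLast?, G.Adj q a) (hsucc : ∀ b ∈ l₂.head?, G.Adj q b) :
    IsPathList G (l₁ ++ q :: l₂) where
  isChain := by
    obtain ⟨hchain₁, hchain₂, -⟩ := List.isChain_append.1 hl.isChain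
    refine hchain₁.append (List.isChain_cons.2 ⟨hsucc, hchain₂⟩) ?_
    rintro a ha _ ⟨⟩
    exact (hpred a ha).symm
  nodup := List.perm_middle.nodup_iff.2 (List.nodup_cons.2 ⟨hq, hl.nodup⟩)

theorem append_comm {l₁ l₂ : List V} (hl : IsPathList G (l₁ ++ l₂))
    (hends : ∀ a ∈ l₂.getLast?, ∀ b ∈ l₁.head?, G.Adj a b) : IsPathList G (l₂ ++ l₁) where
  isChain := by
    obtain ⟨hchain₁, hchain₂, -⟩ := List.isChain_append.1 hl.isChain
    exact hchain₂.append hchain₁ hends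
  nodup := List.perm_append_comm.nodup_iff.1 hl.nodup

theorem exists_length_eq_add_one_of_adj_head (hl : IsPathList G l) (hq : q ∉ l) (hne : l ≠ [])
    (h : G.Adj q (l.head hne)) : ∃ l', IsPathList G l' ∧ l'.length = l.length + 1 :=
  ⟨_, append_cons (l₁ := []) hl hq (by simp) (by simpa [List.head?_eq_some_head hne]), by simp⟩

theorem exists_length_eq_add_one_of_adj_getLast (hl : IsPathList G l) (hq : q ∉ l) (hne : l ≠ [])
    (h : G.Adj q (l.getLast hne)) : ∃ l', IsPathList G l' ∧ l'.length = l.length + 1 := by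
  rw [← l.append_nil] at hl hq
  exact ⟨_, hl.append_cons hq (by simpa [List.getLast?_eq_some_getLast hne]) (by simp), by simp⟩

theorem exists_length_eq_add_one_of_adj_getElem_of_adj_getElem_succ (hl : IsPathList G l)
    (hq : q ∉ l) {i : ℕ} (hi : i + 1 < l.length) (h : G.Adj q l[i]) (h' : G.Adj q l[i + 1]) :
    ∃ l', IsPathList G l' ∧ l'.length = l.length + 1 := by
  rw [← l.take_append_drop (i + 1)] at hl hq
  refine ⟨_, hl.append_cons hq ?_ ?_, ?_⟩
  · simpa [List.getLast?_take, Nat.lt_of_succ_lt hi] using h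
  · simpa [hi] using h'
  · simp only [List.length_append, List.length_cons, List.length_take, List.length_drop]
    omega

theorem exists_length_eq_add_one_of_adj_getLast_head (hl : IsPathList G l) (hq : q ∉ l)
    (hne : l ≠ []) (h : G.Adj (l.getLast hne) (l.head hne)) (hG : G.Preconnected) :
    ∃ l', IsPathList G l' ∧ l'.length = l.length + 1 := by
  obtain ⟨p⟩ := hG (l.head hne) q
  obtain ⟨⟨⟨x, y⟩, hxy⟩, -, hx, hy⟩ :=
    p.exists_boundary_dart {v | v ∈ l} (l.head_mem hne) hq
  obtain ⟨l₁, l₂, rfl⟩ := List.append_of_mem hx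
  have hrot : IsPathList G (x :: l₂ ++ l₁) := hl.append_comm fun a ha b hb => by
    have ha' : (l₁ ++ x :: l₂).getLast hne = a := by
      rwa [List.getLast_eq_iff_getLast?_eq_some, List.getLast?_append_cons]
    have hb' : (l₁ ++ x :: l₂).head hne = b :=
      (List.head_eq_iff_head?_eq_some hne).2 (List.mem_head?_append_of_mem_head? hb)
    exact ha' ▸ hb' ▸ h
  have hy' : y ∉ x :: l₂ ++ l₁ := mt List.perm_append_comm.mem_iff.1 hy
  obtain ⟨l', hl', hlen⟩ :=
    hrot.exists_length_eq_add_one_of_adj_head hy' (List.cons_ne_nil _ _) hxy.symm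
  exact ⟨l', hl', hlen.trans (by rw [List.perm_append_comm.length_eq])⟩

theorem exists_mem_of_isPathVertexCover (hl : IsPathList G l) (hne : l ≠ []) {S : Set V}
    (hS : G.IsPathVertexCover l.length S) : ∃ x ∈ l, x ∈ S := by
  have hsupp := SimpleGraph.Walk.support_ofSupport hne hl.isChain
  obtain ⟨x, hx, hxS⟩ := hS (.ofSupport l hne hl.isChain)
    ((SimpleGraph.Walk.isPath_def _).2 (hsupp.symm ▸ hl.nodup)) (congrArg _ hsupp)
  exact ⟨x, hsupp ▸ hx, hxS⟩

end IsPathList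

theorem mem_of_nodup_of_card_le_length_add_one [Fintype V] {l : List V} (hl : l.Nodup)
    (hcard : Fintype.card V ≤ l.length + 1) {v w : V} (hvw : v ≠ w) (hw : w ∉ l) : v ∈ l := by
  by_contra hv
  have hnodup : (v :: w :: l).Nodup := by simp [hvw, hv, hw, hl]
  have := hnodup.length_le_card
  simp only [List.length_cons] at this
  omega

theorem isPathVertexCover_singleton_of_neighborSet_subset [Fintype V] {k : ℕ} (hk : 2 ≤ k)
    (hcard : Fintype.card V ≤ k + 1) {v w : V} (hvw : v ≠ w) (hv : G.neighborSet v ⊆ {w}) :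
    G.IsPathVertexCover k {w} := by
  intro a b p hp hlen
  refine ⟨w, ?_, rfl⟩
  by_contra hw
  have hvp : v ∈ p.support := mem_of_nodup_of_card_le_length_add_one hp.support_nodup
    (hlen ▸ hcard) hvw hw
  have hnil : ¬ p.Nil := fun h => by
    rw [SimpleGraph.Walk.length_support, SimpleGraph.Walk.length_eq_zero_iff.2 h] at hlen
    omega
  obtain ⟨e, he, hve⟩ := (SimpleGraph.Walk.mem_support_iff_exists_mem_edges_of_not_nil hnil).1 hvp
  obtain ⟨x, rfl⟩ := Sym2.mem_iff_exists.1 hve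
  have hx : x = w := hv (p.adj_of_mem_edges he)
  exact hw (hx ▸ p.snd_mem_support_of_mem_edges he)

section PathNum

variable [Fintype V] {k : ℕ}

theorem pathNum_le_card {S : Finset V} (hS : G.IsPathVertexCover k S) : G.pathNum k ≤ S.card :=
  Nat.sInf_le ⟨S, hS, rfl⟩

theorem exists_isPathVertexCover_card_eq_pathNum (G : SimpleGraph V) (k : ℕ) :
    ∃ S : Finset V, G.IsPathVertexCover k S ∧ S.card = G.pathNum k :=
  Nat.sInf_mem (s := {m | ∃ S : Finset V, G.IsPathVertexCover k S ∧ S.card = m})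
    ⟨_, Finset.univ, fun u _ p _ _ => ⟨u, p.start_mem_support, by simp⟩, rfl⟩

theorem IsPathList.length_ne_of_pathNum_eq_zero (h : G.pathNum k = 0) (hk : k ≠ 0) {l : List V}
    (hl : IsPathList G l) : l.length ≠ k := by
  rintro rfl
  obtain ⟨S, hS, hcard⟩ := exists_isPathVertexCover_card_eq_pathNum G l.length
  obtain rfl : S = ∅ := Finset.card_eq_zero.1 (hcard.trans h)
  obtain ⟨x, -, hx⟩ := hl.exists_mem_of_isPathVertexCover (mt List.length_eq_zero_iff.2 hk) hS
  exact Finset.notMem_empty x hx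

theorem two_le_ncard_neighborSet (hk : 2 ≤ k) (hcard : Fintype.card V ≤ k + 1)
    (h : 2 ≤ G.pathNum k) (v : V) : 2 ≤ (G.neighborSet v).ncard := by
  have hcover {w : V} (hvw : v ≠ w) : ¬ G.neighborSet v ⊆ {w} := fun hv => by
    have hw : G.IsPathVertexCover k ({w} : Finset V) := by
      simpa using isPathVertexCover_singleton_of_neighborSet_subset hk hcard hvw hv
    exact absurd (pathNum_le_card hw) (by rw [Finset.card_singleton]; omega)
  have hnontrivial : Nontrivial V := by
    obtain ⟨S, -, hS⟩ := exists_isPathVertexCover_card_eq_pathNum G k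
    exact Fintype.one_lt_card_iff_nontrivial.1 (by have := S.card_le_univ; omega)
  by_contra hlt
  have hsub : (G.neighborSet v).Subsingleton :=
    Set.ncard_le_one_iff_subsingleton.1 (by omega)
  obtain hempty | ⟨w, hw⟩ := hsub.eq_empty_or_singleton
  · obtain ⟨w, hwv⟩ := exists_ne v
    exact hcover hwv.symm (hempty ▸ Set.empty_subset _)
  · have hvw : G.Adj v w := hw.ge rfl
    exact hcover hvw.ne hw.le

end PathNum

end PathVertexCover

/-- Lemma 9 (1)–(2) of the paper. The vertices of `G` are `p 0, …, p (n-2)`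
(the paper's `p_1, …, p_{n-1}`) together with `q`, and `p 0 − p 1 − ⋯ − p (n-2)`
is a path in `G`. -/
theorem structure_of_no_hamiltonian_path₁ {V : Type*} [Fintype V] (G : SimpleGraph V)
    (n : ℕ) (hn : 4 ≤ n) (hcard : Fintype.card V = n)
    (p : Fin (n - 1) → V) (q : V)
    (hinj : Function.Injective p) (hq : q ∉ Set.range p)
    (hpath : ∀ (i : ℕ) (h : i + 1 < n - 1),
      G.Adj (p ⟨i, by omega⟩) (p ⟨i + 1, h⟩))
    (hconn : G.Connected)
    (h1 : G.pathNum (n - 1) = 2) (h2 : G.pathNum n = 0) :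
    (2 ≤ (G.neighborSet (p ⟨0, by omega⟩)).ncard ∧
     2 ≤ (G.neighborSet (p ⟨n - 2, by omega⟩)).ncard) ∧
    (¬ G.Adj (p ⟨0, by omega⟩) (p ⟨n - 2, by omega⟩) ∧
     ¬ G.Adj q (p ⟨0, by omega⟩) ∧
     ¬ G.Adj q (p ⟨n - 2, by omega⟩) ∧
     ∀ (j : ℕ) (hj1 : 1 ≤ j) (hj2 : j + 1 < n - 1),
       G.Adj q (p ⟨j, by omega⟩) → ¬ G.Adj q (p ⟨j + 1, hj2⟩)) := by
  have hl : PathVertexCover.IsPathList G (List.ofFn p) :=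
    ⟨List.isChain_ofFn.2 hpath, List.nodup_ofFn.2 hinj⟩
  have hql : q ∉ List.ofFn p := mt List.mem_ofFn.1 hq
  have hne : List.ofFn p ≠ [] := mt List.ofFn_eq_nil_iff.1 (by omega)
  have hmax : ¬ ∃ l, PathVertexCover.IsPathList G l ∧ l.length = (List.ofFn p).length + 1 := by
    rintro ⟨l, hl, hlen⟩
    refine hl.length_ne_of_pathNum_eq_zero h2 (by omega) ?_
    rw [hlen, List.length_ofFn]
    omega
  have hdeg := PathVertexCover.two_le_ncard_neighborSet (by omega) (by omega) h1.ge
  refine ⟨⟨hdeg _, hdeg _⟩, fun hends => hmax ?_, fun hfirst => hmax ?_, fun hlast => hmax ?_,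
    fun j _ hj2 hqj hqj' => hmax ?_⟩
  · refine hl.exists_length_eq_add_one_of_adj_getLast_head hql hne ?_ hconn.preconnected
    simpa [List.getLast_ofFn, List.head_ofFn, Nat.sub_sub] using hends.symm
  · refine hl.exists_length_eq_add_one_of_adj_head hql hne ?_
    simpa [List.head_ofFn] using hfirst
  · refine hl.exists_length_eq_add_one_of_adj_getLast hql hne ?_
    simpa [List.getLast_ofFn, Nat.sub_sub] using hlast
  · exact hl.exists_length_eq_add_one_of_adj_getElem_of_adj_getElem_succ hql
      (by simpa using hj2) (by simpa using hqj) (by simpa using hqj')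
end
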